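/- Every primitive word w over a linearly ordered alphabet has exactly one cyclic rotation that is a Galois word; equivalently, in every conjugacy class of primitive words there is a unique ≼_alt-minimal element and it is the unique Galois word of the class. -/

import Mathlib

namespace Paper

variable {α : Type*}

/-- Extended alternating lexicographic strict order; the flag `b` is `true`
when the current position index is even. -/
def altLtAux [LinearOrder α] : Bool → List α → List α → Prop
  | _, [], [] => False
  | b, [], _ :: _ => b = true
  | b, _ :: _, [] => b = false
  | b, c :: x, d :: y => (if b then c < d else d < c) ∨ (c = d ∧ altLtAux (!b) x y)

/-- The alternating lexicographic strict order (positions indexed from 0). -/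
def AltLt [LinearOrder α] (x y : List α) : Prop := altLtAux true x y

/-- The reflexive alternating lexicographic order. -/
def AltLe [LinearOrder α] (x y : List α) : Prop := x = y ∨ AltLt x y

/-- A word is primitive if its cyclic rotations are pairwise distinct. -/
def Primitive (w : List α) : Prop :=
  ∀ i j, i < w.length → j < w.length → w.rotate i = w.rotate j → i = j


/-- A primitive word `w` is a Galois word if `w ≼_alt vu` for every nontrivial
factorization `w = uv`. -/
def IsGalois [LinearOrder α] (w : List α) : Prop :=
  Primitive w ∧ ∀ u v : List α, w = u ++ v → u ≠ [] → v ≠ [] → AltLe w (v ++ u)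

/-!
The relation `AltLt` is a strict total order because comparing tails one position later reverses
its direction, so that proofs can proceed by induction on words without tracking parity. A
primitive word is Galois precisely when it is the least element of its conjugacy class, and a
finite nonempty class has exactly one least element; primitivity makes its index unique.
-/

open scoped List

section AlternatingOrder

variable [LinearOrder α] {x y z : List α} {c d : α}

theorem altLtAux_not (b : Bool) (x y : List α) : altLtAux (!b) x y ↔ altLtAux b y x := by
  induction x generalizing b y with
  | nil => cases y <;> simp [altLtAux]
  | cons c x ih =>
    cases y with
    | nil => simp [altLtAux]
    | cons d y => cases b <;> simp [altLtAux, ← ih, eq_comm]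

theorem not_altLt_nil (x : List α) : ¬ AltLt x [] := by
  cases x <;> simp [AltLt, altLtAux]

theorem altLt_nil_cons (c : α) (x : List α) : AltLt [] (c :: x) := by
  simp [AltLt, altLtAux]

theorem altLt_cons_cons : AltLt (c :: x) (d :: y) ↔ c < d ∨ c = d ∧ AltLt y x := by
  simp only [AltLt, altLtAux, if_true, altLtAux_not]

theorem AltLt.irrefl (x : List α) : ¬ AltLt x x := by
  induction x with
  | nil => exact not_altLt_nil []
  | cons c x ih => simpa only [altLt_cons_cons, lt_irrefl, false_or, true_and] using ih

theorem AltLt.trans (hxy : AltLt x y) (hyz : AltLt y z) : AltLt x z := by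
  -- Passing to tails swaps the outer words, so the induction is on the middle one.
  induction y generalizing x z with
  | nil => exact (not_altLt_nil x hxy).elim
  | cons d y ih =>
    cases z with
    | nil => exact (not_altLt_nil _ hyz).elim
    | cons e z =>
      cases x with
      | nil => exact altLt_nil_cons e z
      | cons c x =>
        rw [altLt_cons_cons] at hxy hyz ⊢
        rcases hxy with hcd | ⟨rfl, hyx⟩ <;> rcases hyz with hde | ⟨rfl, hzy⟩
        · exact .inl (hcd.trans hde)
        · exact .inl hcd
        · exact .inl hde
        · exact .inr ⟨rfl, ih hzy hyx⟩

theorem AltLt.trichotomous (x y : List α) : AltLt x y ∨ x = y ∨ AltLt y x := by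
  induction x generalizing y with
  | nil =>
    cases y with
    | nil => exact .inr (.inl rfl)
    | cons d y => exact .inl (altLt_nil_cons d y)
  | cons c x ih =>
    cases y with
    | nil => exact .inr (.inr (altLt_nil_cons c x))
    | cons d y =>
      simp only [altLt_cons_cons, List.cons.injEq]
      rcases lt_trichotomy c d with hcd | rfl | hdc
      · exact .inl (.inl hcd)
      · simpa [or_comm, or_left_comm, or_assoc] using ih y
      · exact .inr (.inr (.inl hdc))

instance : IsStrictTotalOrder (List α) AltLt where
  irrefl := AltLt.irrefl
  trans _ _ _ := AltLt.trans
  trichotomous x y hxy hyx := ((AltLt.trichotomous x y).resolve_left hxy).resolve_right hyx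

open Classical in
/-- The alternating lexicographic linear order on words, whose `≤` unfolds to `AltLe`. It is not
an instance because `List α` already carries the lexicographic order. -/
noncomputable abbrev altLinearOrder (α : Type*) [LinearOrder α] : LinearOrder (List α) :=
  linearOrderOfSTO AltLt

theorem AltLe.antisymm (hxy : AltLe x y) (hyx : AltLe y x) : x = y :=
  (altLinearOrder α).le_antisymm x y hxy hyx

theorem exists_forall_altLe {ι : Type*} [Finite ι] [Nonempty ι] (f : ι → List α) :
    ∃ i, ∀ j, AltLe (f i) (f j) :=
  letI := altLinearOrder α
  Finite.exists_min f

end AlternatingOrder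

section Conjugacy

variable {v w : List α}

theorem exists_append_of_isRotated (h : w ~r v) : ∃ s t, w = s ++ t ∧ v = t ++ s := by
  obtain ⟨k, hk, rfl⟩ := List.isRotated_iff_mod.mp h
  exact ⟨w.take k, w.drop k, (List.take_append_drop k w).symm,
    List.rotate_eq_drop_append_take hk⟩

theorem exists_fin_rotate_eq_of_isRotated (hw : w ≠ []) (h : w ~r v) :
    ∃ i : Fin w.length, w.rotate i.val = v := by
  obtain ⟨k, rfl⟩ := h
  exact ⟨⟨k % w.length, Nat.mod_lt k (List.length_pos_iff.mpr hw)⟩, List.rotate_mod w k⟩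

theorem Primitive.rotate (hw : Primitive w) (k : ℕ) : Primitive (w.rotate k) := by
  intro i j hi hj hij
  rw [List.length_rotate] at hi hj
  have hrot : (w.rotate i).rotate k = (w.rotate j).rotate k := by
    simpa only [List.rotate_rotate, Nat.add_comm k] using hij
  exact hw i j hi hj (List.rotate_injective k hrot)

theorem isGalois_iff_forall_isRotated [LinearOrder α] :
    IsGalois w ↔ Primitive w ∧ ∀ v, w ~r v → AltLe w v := by
  refine and_congr_right fun _ => ⟨fun hmin v hv => ?_, fun hmin s t hst _ _ => ?_⟩
  · obtain ⟨s, t, hst, rfl⟩ := exists_append_of_isRotated hv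
    rcases eq_or_ne s [] with rfl | hs
    · exact .inl (by simpa using hst)
    rcases eq_or_ne t [] with rfl | ht
    · exact .inl (by simpa using hst)
    exact hmin s t hst hs ht
  · exact hmin _ (hst ▸ List.isRotated_append)

theorem Primitive.isGalois_rotate_iff [LinearOrder α] (hprim : Primitive w) (hw : w ≠ []) (k : ℕ) :
    IsGalois (w.rotate k) ↔ ∀ j : Fin w.length, AltLe (w.rotate k) (w.rotate j.val) := by
  rw [isGalois_iff_forall_isRotated, and_iff_right (hprim.rotate k)]
  have hk : w.rotate k ~r w := List.IsRotated.forall w k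
  refine ⟨fun hmin j => hmin _ (hk.trans ⟨j, rfl⟩), fun hmin v hv => ?_⟩
  obtain ⟨j, rfl⟩ := exists_fin_rotate_eq_of_isRotated hw (hk.symm.trans hv)
  exact hmin j

end Conjugacy

/-- every nonempty primitive word has exactly one cyclic rotation
that is a Galois word, and that rotation is the ≼_alt-minimal one in the
conjugacy class. -/
theorem exists_unique_galois_rotation [LinearOrder α] (w : List α)
    (hw : w ≠ []) (hprim : Primitive w) :
    (∃! i : Fin w.length, IsGalois (w.rotate i.val)) ∧
      ∀ i j : Fin w.length, IsGalois (w.rotate i.val) →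
        AltLe (w.rotate i.val) (w.rotate j.val) := by
  have : Nonempty (Fin w.length) := ⟨⟨0, List.length_pos_iff.mpr hw⟩⟩
  simp only [hprim.isGalois_rotate_iff hw]
  refine ⟨?_, fun i j hi => hi j⟩
  obtain ⟨i, hi⟩ := exists_forall_altLe fun k : Fin w.length => w.rotate k.val
  refine ⟨i, hi, fun j hj => Fin.ext ?_⟩
  exact hprim j i j.isLt i.isLt ((hj i).antisymm (hi j))

end Paper
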